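/- For every n-qudit state ρ, every α ∈ [1,∞) (where D_1 = D is the relative entropy), and every MSPS σ with σ ≠ M(ρ): D_α(ρ‖σ) > D_α(ρ‖M(ρ)); that is, the mean state is the unique minimizer of the sandwiched Rényi relative entropy from ρ among all MSPS. -/

import Mathlib

open scoped BigOperators ComplexOrder Classical ENNReal
open Matrix

namespace PaperQI

/-- The computational-basis index set `ℤ_d^n` for an `n`-qudit system. -/
abbrev QV (d n : ℕ) := Fin n → ZMod d

/-- Matrices (linear operators) on the `n`-qudit Hilbert space `(ℂ^d)^{⊗ n}`,
written in the computational basis indexed by `ℤ_d^n`. -/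
abbrev Mat (d n : ℕ) := Matrix (QV d n) (QV d n) ℂ

/-- The character `ξ^z = exp(2πi z/d)` for `z ∈ ℤ_d`. -/
noncomputable def ch (d : ℕ) (z : ZMod d) : ℂ :=
  Complex.exp (2 * Real.pi * Complex.I * (z.val : ℂ) / (d : ℂ))

/-- Dot product on `ℤ_d^n`. -/
def qdot {d n : ℕ} (p k : QV d n) : ZMod d := ∑ i, p i * k i

/-- The `n`-qudit Weyl operator `w(p,q) = ⊗_i ξ^{-2⁻¹ p_i q_i} Z^{p_i} X^{q_i}`
(for odd prime `d`).  Its matrix entries are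
`w(p,q)[k+q, k] = ξ^{p·k + 2⁻¹ p·q}`. -/
noncomputable def weyl (d n : ℕ) [Fact (Nat.Prime d)] (p q : QV d n) : Mat d n :=
  Matrix.of fun k' k =>
    if k' = k + q then ch d (qdot p k + (2 : ZMod d)⁻¹ * qdot p q) else 0

/-- `ρ` is an `n`-qudit state: positive semidefinite with trace one. -/
def IsState (d n : ℕ) [Fact (Nat.Prime d)] (ρ : Mat d n) : Prop :=
  ρ.PosSemidef ∧ ρ.trace = 1

/-- The characteristic function `Ξ_ρ(p,q) = Tr[ρ w(-p,-q)]`. -/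
noncomputable def xi (d n : ℕ) [Fact (Nat.Prime d)] (ρ : Mat d n)
    (pq : QV d n × QV d n) : ℂ :=
  (ρ * weyl d n (-pq.1) (-pq.2)).trace

/-- The mean state `M(ρ) = d^{-n} ∑_{|Ξ_ρ(p,q)| = 1} Ξ_ρ(p,q) w(p,q)`. -/
noncomputable def meanState (d n : ℕ) [Fact (Nat.Prime d)] (ρ : Mat d n) : Mat d n :=
  ((d : ℂ) ^ n)⁻¹ •
    ∑ pq : QV d n × QV d n,
      if ‖xi d n ρ pq‖ = 1 then xi d n ρ pq • weyl d n pq.1 pq.2 else 0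

/-- `ρ` is a minimal stabilizer-projection state (MSPS): for some `r ≤ n` there are
mutually commuting Weyl operators `w(p_i,q_i)`, `i = 1,…,r`, whose labels generate a
subgroup of `V^n` of order `d^r`, and phases `x ∈ ℤ_d^r`, such that
`ρ = d^{-(n-r)} ∏_i ( (1/d) ∑_{k ∈ ℤ_d} (ξ^{x_i} w(p_i,q_i))^k )`. -/
noncomputable def IsMSPS (d n : ℕ) [Fact (Nat.Prime d)] (ρ : Mat d n) : Prop :=
  ∃ r : ℕ, r ≤ n ∧
    ∃ (p q : Fin r → QV d n) (x : Fin r → ZMod d),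
      (∀ i j, Commute (weyl d n (p i) (q i)) (weyl d n (p j) (q j))) ∧
      Nat.card (AddSubgroup.closure (Set.range fun i => (p i, q i)) :
        AddSubgroup (QV d n × QV d n)) = d ^ r ∧
      ρ = ((d : ℂ) ^ (n - r))⁻¹ •
        (List.ofFn fun i =>
          (d : ℂ)⁻¹ • ∑ k : ZMod d, (ch d (x i) • weyl d n (p i) (q i)) ^ k.val).prod

/-- The magic gap `MG(ρ) = 1 - max{|Ξ_ρ(p,q)| : Ξ_ρ(p,q) ≠ 0, |Ξ_ρ(p,q)| ≠ 1}`,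
and `MG(ρ) = 0` if this set is empty. -/
noncomputable def magicGap (d n : ℕ) [Fact (Nat.Prime d)] (ρ : Mat d n) : ℝ :=
  let s : Finset ℝ :=
    (Finset.univ.filter fun pq : QV d n × QV d n =>
      xi d n ρ pq ≠ 0 ∧ ‖xi d n ρ pq‖ ≠ 1).image
      fun pq => ‖xi d n ρ pq‖
  if h : s.Nonempty then 1 - s.max' h else 0

/-- Von Neumann entropy `H(ρ) = -∑ λ_i log λ_i` (natural log, eigenvalues of `ρ`),
with the convention `0 log 0 = 0`; junk value `0` on non-Hermitian matrices. -/
noncomputable def vnEnt {d n : ℕ} [Fact (Nat.Prime d)] (ρ : Mat d n) : ℝ :=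
  if h : ρ.IsHermitian then -∑ i, h.eigenvalues i * Real.log (h.eigenvalues i) else 0

/-- Rényi entropy `H_α` for `α ∈ [0,∞]`:  `H_0 = log rank`, `H_1 = H` (von Neumann),
`H_∞ = -log λ_max`, and `H_α = (1-α)⁻¹ log ∑ λ_i^α` otherwise. -/
noncomputable def renyiEnt {d n : ℕ} [Fact (Nat.Prime d)] (α : ℝ≥0∞) (ρ : Mat d n) : ℝ :=
  if h : ρ.IsHermitian then
    if α = 0 then Real.log (ρ.rank : ℝ)
    else if α = 1 then -∑ i, h.eigenvalues i * Real.log (h.eigenvalues i)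
    else if α = ⊤ then -Real.log (⨆ i, h.eigenvalues i)
    else (1 - α.toReal)⁻¹ * Real.log (∑ i, h.eigenvalues i ^ α.toReal)
  else 0

/-- Matrix logarithm on the support: `log ρ = U diag(log λ_i) U†` via the spectral
decomposition, with `log 0 = 0` on the kernel; junk value `0` off Hermitian matrices. -/
noncomputable def matLog {d n : ℕ} [Fact (Nat.Prime d)] (ρ : Mat d n) : Mat d n :=
  if h : ρ.IsHermitian then
    (h.eigenvectorUnitary : Mat d n) *
      Matrix.diagonal (fun i => (Real.log (h.eigenvalues i) : ℂ)) *
      star (h.eigenvectorUnitary : Mat d n)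
  else 0

/-- Matrix real power on the support: `ρ^t = U diag(λ_i^t) U†`, with `0^t = 0` on the
kernel (for `t ≠ 0`); junk value `0` off Hermitian matrices. -/
noncomputable def matRpow {d n : ℕ} [Fact (Nat.Prime d)] (ρ : Mat d n) (t : ℝ) : Mat d n :=
  if h : ρ.IsHermitian then
    (h.eigenvectorUnitary : Mat d n) *
      Matrix.diagonal (fun i => ((h.eigenvalues i ^ t : ℝ) : ℂ)) *
      star (h.eigenvectorUnitary : Mat d n)
  else 0

/-- Support inclusion `supp ρ ⊆ supp σ`, expressed as `ker σ ⊆ ker ρ`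
(the correct notion for positive semidefinite matrices). -/
def suppLE {d n : ℕ} [Fact (Nat.Prime d)] (ρ σ : Mat d n) : Prop :=
  ∀ v : QV d n → ℂ, σ.mulVec v = 0 → ρ.mulVec v = 0

/-- Relative entropy `D(ρ‖σ) = Tr[ρ(log ρ - log σ)]` when `supp ρ ⊆ supp σ`, else `+∞`. -/
noncomputable def relEnt {d n : ℕ} [Fact (Nat.Prime d)] (ρ σ : Mat d n) : EReal :=
  if suppLE ρ σ then (((ρ * (matLog ρ - matLog σ)).trace.re : ℝ) : EReal) else ⊤

/-- Sandwiched Rényi relative entropy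
`D_α(ρ‖σ) = (α-1)⁻¹ log Tr[(σ^{(1-α)/(2α)} ρ σ^{(1-α)/(2α)})^α]` for `α ≠ 1`
(with `+∞` when `supp ρ ⊄ supp σ`), and `D_1 = D` the relative entropy. -/
noncomputable def sandRenyi {d n : ℕ} [Fact (Nat.Prime d)] (α : ℝ) (ρ σ : Mat d n) :
    EReal :=
  if α = 1 then relEnt ρ σ
  else if suppLE ρ σ then
    let x : ℝ := (α - 1)⁻¹ * Real.log
      ((matRpow (matRpow σ ((1 - α) / (2 * α)) * ρ * matRpow σ ((1 - α) / (2 * α)))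
        α).trace.re)
    (x : EReal)
  else ⊤

/-- The key unitary `U|i,j⟩ = |N g₁₁ i - N g₁₀ j, -N g₀₁ i + N g₀₀ j⟩`,
where `N = (det G)⁻¹` in `ℤ_d`. -/
noncomputable def convU (d n : ℕ) [Fact (Nat.Prime d)] (g00 g01 g10 g11 : ZMod d) :
    Matrix (QV d n × QV d n) (QV d n × QV d n) ℂ :=
  Matrix.of fun kl ij =>
    if kl = ((fun a => (g00 * g11 - g01 * g10)⁻¹ * g11 * ij.1 a
                      - (g00 * g11 - g01 * g10)⁻¹ * g10 * ij.2 a : QV d n),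
             (fun a => -((g00 * g11 - g01 * g10)⁻¹ * g01) * ij.1 a
                      + (g00 * g11 - g01 * g10)⁻¹ * g00 * ij.2 a : QV d n))
    then 1 else 0

/-- Tensor (Kronecker) product of two `n`-qudit operators, on the doubled system. -/
def kron {d n : ℕ} (ρ σ : Mat d n) : Matrix (QV d n × QV d n) (QV d n × QV d n) ℂ :=
  Matrix.of fun ij kl => ρ ij.1 kl.1 * σ ij.2 kl.2

/-- Partial trace over the second `n`-qudit factor. -/
noncomputable def ptrB {d n : ℕ} [Fact (Nat.Prime d)]
    (M : Matrix (QV d n × QV d n) (QV d n × QV d n) ℂ) : Mat d n :=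
  Matrix.of fun i i' => ∑ j : QV d n, M (i, j) (i', j)

/-- The convolution `ρ ⊠ σ = Tr_B[U (ρ ⊗ σ) U†]` with parameter matrix
`G = [g₀₀, g₀₁; g₁₀, g₁₁]`. -/
noncomputable def conv (d n : ℕ) [Fact (Nat.Prime d)] (g00 g01 g10 g11 : ZMod d)
    (ρ σ : Mat d n) : Mat d n :=
  ptrB (convU d n g00 g01 g10 g11 * kron ρ σ * (convU d n g00 g01 g10 g11)ᴴ)

/-- The beam-splitter unitary `U_{s,t}|i,j⟩ = |s i + t j, t i - s j⟩`. -/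
noncomputable def bsU (d n : ℕ) [Fact (Nat.Prime d)] (s t : ZMod d) :
    Matrix (QV d n × QV d n) (QV d n × QV d n) ℂ :=
  Matrix.of fun kl ij =>
    if kl = ((fun a => s * ij.1 a + t * ij.2 a : QV d n),
             (fun a => t * ij.1 a - s * ij.2 a : QV d n))
    then 1 else 0

/-- The beam-splitter convolution `ρ ⊠_{s,t} σ = Tr_B[U_{s,t} (ρ ⊗ σ) U_{s,t}†]`. -/
noncomputable def bsConv (d n : ℕ) [Fact (Nat.Prime d)] (s t : ZMod d)
    (ρ σ : Mat d n) : Mat d n :=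
  ptrB (bsU d n s t * kron ρ σ * (bsU d n s t)ᴴ)

/-- Iterated self-convolution: `⊠^0 ρ = ρ` and `⊠^{N+1} ρ = (⊠^N ρ) ⊠ ρ`. -/
noncomputable def bsIter (d n : ℕ) [Fact (Nat.Prime d)] (s t : ZMod d) :
    ℕ → Mat d n → Mat d n
  | 0, ρ => ρ
  | N + 1, ρ => bsConv d n s t (bsIter d n s t N ρ) ρ

/-- `ρ` is the pure stabilizer state `|ψ⟩⟨ψ|` with stabilizer label group `S ⊆ V^n`:
`S` has order `d^n` and `ψ` is a common eigenvector of all `w(p,q)`, `(p,q) ∈ S`. -/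
noncomputable def IsPureStabilizerWithGroup (d n : ℕ) [Fact (Nat.Prime d)]
    (ρ : Mat d n) (S : AddSubgroup (QV d n × QV d n)) : Prop :=
  Nat.card S = d ^ n ∧
    ∃ ψ : QV d n → ℂ, ψ ≠ 0 ∧
      ρ = Matrix.of (fun a b => ψ a * starRingEnd ℂ (ψ b)) ∧
      ∀ pq ∈ S, ∃ c : ℂ, (weyl d n pq.1 pq.2).mulVec ψ = c • ψ

/-- `ρ` is a pure stabilizer state. -/
noncomputable def IsPureStabilizer (d n : ℕ) [Fact (Nat.Prime d)] (ρ : Mat d n) : Prop :=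
  ∃ S : AddSubgroup (QV d n × QV d n), IsPureStabilizerWithGroup d n ρ S

/-- `ρ` is a stabilizer state: a convex combination of pure stabilizer states. -/
noncomputable def IsStabilizerState (d n : ℕ) [Fact (Nat.Prime d)] (ρ : Mat d n) : Prop :=
  ∃ (m : ℕ) (p : Fin m → ℝ) (τ : Fin m → Mat d n),
    (∀ i, 0 ≤ p i) ∧ ∑ i, p i = 1 ∧ (∀ i, IsPureStabilizer d n (τ i)) ∧
    ρ = ∑ i, (p i : ℂ) • τ i

/-- `U` is a Clifford unitary: a unitary mapping each Weyl operator, under conjugation,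
to a complex phase times a Weyl operator. -/
noncomputable def IsClifford (d n : ℕ) [Fact (Nat.Prime d)] (U : Mat d n) : Prop :=
  U ∈ Matrix.unitaryGroup (QV d n) ℂ ∧
    ∀ pq : QV d n × QV d n, ∃ (c : ℂ) (pq' : QV d n × QV d n),
      ‖c‖ = 1 ∧ U * weyl d n pq.1 pq.2 * Uᴴ = c • weyl d n pq'.1 pq'.2

/-- The divergence-based quantum Fisher information `J(ρ; H) = Tr[ρ [H,[H, log ρ]]]`. -/
noncomputable def fisherJ {d n : ℕ} [Fact (Nat.Prime d)] (ρ H : Mat d n) : ℝ :=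
  (ρ * (H * (H * matLog ρ - matLog ρ * H) - (H * matLog ρ - matLog ρ * H) * H)).trace.re

/-- Embed a single-qudit operator at site `k` of an `n`-qudit system
(tensored with the identity elsewhere). -/
noncomputable def embedAt (d n : ℕ) (k : Fin n) (M : Matrix (ZMod d) (ZMod d) ℂ) :
    Mat d n :=
  Matrix.of fun v w => if ∀ i, i ≠ k → v i = w i then M (v k) (w k) else 0

/-- The rank-one projection `H_j^Z = |j⟩⟨j|` onto the eigenvector of `Z`
with eigenvalue `ξ^j`. -/
noncomputable def projZ (d : ℕ) (j : ZMod d) : Matrix (ZMod d) (ZMod d) ℂ :=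
  Matrix.of fun a b => if a = j ∧ b = j then 1 else 0

/-- The rank-one projection `H_j^X` onto the eigenvector of `X` with eigenvalue `ξ^j`;
its entries are `(H_j^X)_{a b} = d⁻¹ ξ^{j(b-a)}`. -/
noncomputable def projX (d : ℕ) (j : ZMod d) : Matrix (ZMod d) (ZMod d) ℂ :=
  Matrix.of fun a b => (d : ℂ)⁻¹ * ch d (j * (b - a))

/-- Total Fisher information
`J(ρ) = ∑_{k=1}^n ∑_{j ∈ ℤ_d} J(ρ; H_j^{X_k}) + J(ρ; H_j^{Z_k})`. -/
noncomputable def fisherTotal (d n : ℕ) [Fact (Nat.Prime d)] (ρ : Mat d n) : ℝ :=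
  ∑ k : Fin n, ∑ j : ZMod d,
    (fisherJ ρ (embedAt d n k (projX d j)) + fisherJ ρ (embedAt d n k (projZ d j)))

/-- Holevo capacity of a channel `E`:
`χ(E) = sup H(∑ p_i E(ρ_i)) - ∑ p_i H(E(ρ_i))` over finite ensembles of states. -/
noncomputable def holevoCap (d n : ℕ) [Fact (Nat.Prime d)] (E : Mat d n → Mat d n) : ℝ :=
  ⨆ m : ℕ, ⨆ p : Fin m → ℝ, ⨆ ρs : Fin m → Mat d n,
    ⨆ _ : (∀ i, 0 ≤ p i) ∧ ∑ i, p i = 1 ∧ ∀ i, IsState d n (ρs i),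
      (vnEnt (∑ i, (p i : ℂ) • E (ρs i)) - ∑ i, p i * vnEnt (E (ρs i)))

/-- Hilbert–Schmidt norm `‖A‖₂ = (Tr[A†A])^{1/2}`. -/
noncomputable def hsNorm {d n : ℕ} [Fact (Nat.Prime d)] (A : Mat d n) : ℝ :=
  Real.sqrt ((Aᴴ * A).trace.re)

/-- Trace norm `‖A‖₁ = Tr[(A†A)^{1/2}]`. -/
noncomputable def trNorm {d n : ℕ} [Fact (Nat.Prime d)] (A : Mat d n) : ℝ :=
  (matRpow (Aᴴ * A) (2⁻¹ : ℝ)).trace.re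

/-- Tensor product of an `n₁`-qudit operator with an `n₂`-qudit operator,
as an `(n₁+n₂)`-qudit operator. -/
def tensorMat (d n₁ n₂ : ℕ) (ρ₁ : Mat d n₁) (ρ₂ : Mat d n₂) : Mat d (n₁ + n₂) :=
  Matrix.of fun v w =>
    ρ₁ (fun i => v (Fin.castAdd n₂ i)) (fun i => w (Fin.castAdd n₂ i)) *
    ρ₂ (fun j => v (Fin.natAdd n₁ j)) (fun j => w (Fin.natAdd n₁ j))

/-! ### Qubit (`d = 2`) specific definitions -/

/-- The `n`-qubit Weyl (Pauli) operator `w(p,q) = ⊗_i i^{-p_i q_i} Z^{p_i} X^{q_i}`. -/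
noncomputable def weyl2 (n : ℕ) (p q : Fin n → ZMod 2) :
    Matrix (Fin n → ZMod 2) (Fin n → ZMod 2) ℂ :=
  Matrix.of fun k' k =>
    if k' = k + q then
      ∏ i, ((-Complex.I) ^ ((p i).val * (q i).val) *
        (-1 : ℂ) ^ ((p i * (k i + q i)).val))
    else 0

/-- The `n`-qubit characteristic function `Ξ_ρ(p,q) = Tr[ρ w(p,q)†]`. -/
noncomputable def xi2 (n : ℕ) (ρ : Matrix (Fin n → ZMod 2) (Fin n → ZMod 2) ℂ)
    (pq : (Fin n → ZMod 2) × (Fin n → ZMod 2)) : ℂ :=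
  (ρ * (weyl2 n pq.1 pq.2)ᴴ).trace

/-- The logarithmic magic gap
`LMG(ρ) = -log₂ max{|Ξ_ρ(p,q)| : Ξ_ρ(p,q) ≠ 0, |Ξ_ρ(p,q)| ≠ 1}` (`0` if the set is
empty). -/
noncomputable def lmg (n : ℕ) (ρ : Matrix (Fin n → ZMod 2) (Fin n → ZMod 2) ℂ) : ℝ :=
  let s : Finset ℝ :=
    (Finset.univ.filter fun pq : (Fin n → ZMod 2) × (Fin n → ZMod 2) =>
      xi2 n ρ pq ≠ 0 ∧ ‖xi2 n ρ pq‖ ≠ 1).image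
      fun pq => ‖xi2 n ρ pq‖
  if h : s.Nonempty then -Real.logb 2 (s.max' h) else 0

/-- `U` is an `n`-qubit Clifford unitary. -/
noncomputable def IsClifford2 (n : ℕ) (U : Matrix (Fin n → ZMod 2) (Fin n → ZMod 2) ℂ) :
    Prop :=
  U ∈ Matrix.unitaryGroup (Fin n → ZMod 2) ℂ ∧
    ∀ pq : (Fin n → ZMod 2) × (Fin n → ZMod 2),
      ∃ (c : ℂ) (pq' : (Fin n → ZMod 2) × (Fin n → ZMod 2)),
        ‖c‖ = 1 ∧ U * weyl2 n pq.1 pq.2 * Uᴴ = c • weyl2 n pq'.1 pq'.2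

/-- The T gate `diag(1, e^{iπ/4})` acting on qubit `k` of an `n`-qubit system. -/
noncomputable def tGateAt (n : ℕ) (k : Fin n) :
    Matrix (Fin n → ZMod 2) (Fin n → ZMod 2) ℂ :=
  embedAt 2 n k (Matrix.of fun a b =>
    if a = b then (if a = 0 then 1 else Complex.exp (Real.pi * Complex.I / 4)) else 0)

/-- An `n`-qubit state: positive semidefinite with trace one. -/
def IsState2 (n : ℕ) (ρ : Matrix (Fin n → ZMod 2) (Fin n → ZMod 2) ℂ) : Prop :=
  ρ.PosSemidef ∧ ρ.trace = 1

end PaperQI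

namespace PaperQI

/-!
Write `Ξ = Ξ_ρ`. If `|Ξ(a)| = 1`, the unitary `Ξ(a) w(a)` attains equality in `|Tr ρU| ≤ Tr ρ`, so
it fixes `ρ`; hence the labels `a` with `|Ξ(a)| = 1` form a group `S` and `a ↦ Ξ(a) w(a)` is a
representation of it. If an MSPS `σ` has support containing that of `ρ`, its generators also fix
`ρ`, which forces their phases to be the values of `Ξ`; therefore
`σ = d⁻ⁿ ∑_{a ∈ T} Ξ(a) w(a)` for a subgroup `T ≤ S`, and `M(ρ)` is the case `T = S`.
Such a `σ` acts on the support of `ρ` as the scalar `|T| / dⁿ`, so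
`D_α(ρ‖σ) = -H_α(ρ) - log (|T| / dⁿ)`, which is smallest exactly at `T = S`. If the support of `σ`
does not contain that of `ρ`, the divergence is `+∞`.
-/

section CyclicAverage

variable (𝕜 : Type*) [Field 𝕜] {R : Type*} [Semiring R] [Algebra 𝕜 R] (d : ℕ) [NeZero d]

/-- The average `d⁻¹ ∑_{k ∈ ℤ_d} v ^ k` of the powers of `v`. When `v ^ d = 1` it is the projection
onto the vectors fixed by `v`; here `k ∈ ℤ_d` is represented by `k.val < d`. -/
noncomputable def cyclicAverage (v : R) : R :=
  (d : 𝕜)⁻¹ • ∑ k : ZMod d, v ^ k.val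

variable {𝕜 d}

lemma cyclicAverage_mul_self {v : R} (hv : v ^ d = 1) :
    cyclicAverage 𝕜 d v * v = cyclicAverage 𝕜 d v := by
  rw [cyclicAverage, smul_mul_assoc, Finset.sum_mul]
  congr 1
  refine Fintype.sum_equiv (Equiv.addRight (1 : ZMod d)) _ _ fun k => ?_
  have hval : (k + 1).val = (k.val + 1) % d := by
    rw [ZMod.val_add, ZMod.val_one_eq_one_mod, Nat.add_mod_mod]
  rw [Equiv.coe_addRight, hval, ← pow_succ, pow_eq_pow_mod _ hv]

lemma cyclicAverage_mul_of_mul_eq [CharZero 𝕜] {v x : R} (h : v * x = x) :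
    cyclicAverage 𝕜 d v * x = x := by
  have hpow (k : ℕ) : v ^ k * x = x := pow_mem (S := MulAction.stabilizerSubmonoid R x) h k
  simp only [cyclicAverage, smul_mul_assoc, Finset.sum_mul, hpow, Finset.sum_const,
    Finset.card_univ, ZMod.card, ← Nat.cast_smul_eq_nsmul 𝕜]
  exact inv_smul_smul₀ (NeZero.ne _) x

lemma commute_cyclicAverage_left {v w : R} (h : Commute v w) :
    Commute (cyclicAverage 𝕜 d v) w :=
  (Commute.sum_left _ _ _ fun _ _ => h.pow_left _).smul_left _

lemma list_prod_mul_eq_of_mem {M : Type*} [Monoid M] {l : List M} {v w : M}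
    (hcomm : ∀ u ∈ l, Commute u v) (hw : w ∈ l) (hwv : w * v = w) : l.prod * v = l.prod := by
  obtain ⟨s, t, rfl⟩ := List.append_of_mem hw
  have ht : Commute t.prod v := Commute.list_prod_left _ _ fun u hu => hcomm u (by simp [hu])
  rw [List.prod_append, List.prod_cons, mul_assoc, mul_assoc, ht.eq, ← mul_assoc w, hwv]

variable {r : ℕ}

lemma list_prod_cyclicAverage_mul {v : Fin r → R} (hcomm : ∀ i j, Commute (v i) (v j))
    (hv : ∀ i, v i ^ d = 1) (i : Fin r) :
    (List.ofFn fun j => cyclicAverage 𝕜 d (v j)).prod * v i =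
      (List.ofFn fun j => cyclicAverage 𝕜 d (v j)).prod := by
  refine list_prod_mul_eq_of_mem ?_ (List.mem_ofFn.2 ⟨i, rfl⟩) (cyclicAverage_mul_self (hv i))
  simp only [List.forall_mem_ofFn_iff]
  exact fun j => commute_cyclicAverage_left (hcomm j i)

-- Both sides are projections onto the vectors fixed by the image of `χ`, so each of them
-- absorbs the other.
lemma list_prod_cyclicAverage_eq_average [CharZero 𝕜] {A : Type*} [AddCommGroup A] [Fintype A]
    (χ : AddChar A R) {g : Fin r → A} (hg : ∀ i, d • g i = 0)
    (hclosure : AddSubgroup.closure (Set.range g) = ⊤) :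
    (List.ofFn fun i => cyclicAverage 𝕜 d (χ (g i))).prod =
      (Fintype.card A : 𝕜)⁻¹ • ∑ a, χ a := by
  set Q := (List.ofFn fun i => cyclicAverage 𝕜 d (χ (g i))).prod
  have hcomm (a b : A) : Commute (χ a) (χ b) := by
    rw [Commute, SemiconjBy, ← χ.map_add_eq_mul, add_comm, χ.map_add_eq_mul]
  have hQgen (i : Fin r) : Q * χ (g i) = Q :=
    list_prod_cyclicAverage_mul (fun i j => hcomm (g i) (g j))
      (fun i => by rw [← χ.map_nsmul_eq_pow, hg, χ.map_zero_eq_one]) i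
  have hQ (a : A) : Q * χ a = Q := by
    induction hclosure ▸ AddSubgroup.mem_top a using AddSubgroup.closure_induction with
    | mem _ ha => obtain ⟨i, rfl⟩ := ha; exact hQgen i
    | zero => rw [χ.map_zero_eq_one, mul_one]
    | add a b _ _ ha hb => rw [χ.map_add_eq_mul, ← mul_assoc, ha, hb]
    | neg a _ ha =>
      nth_rw 1 [← ha]
      rw [mul_assoc, ← χ.map_add_eq_mul, add_neg_cancel, χ.map_zero_eq_one, mul_one]
  have hsum (b : A) : χ b * ∑ a, χ a = ∑ a, χ a := by
    rw [Finset.mul_sum]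
    exact Fintype.sum_equiv (Equiv.addLeft b) _ _ fun a => (χ.map_add_eq_mul b a).symm
  have hQsum : Q * ∑ a, χ a = ∑ a, χ a := by
    refine list_prod_mem (S := MulAction.stabilizerSubmonoid R (∑ a, χ a)) ?_
    simp only [List.forall_mem_ofFn_iff]
    exact fun i => cyclicAverage_mul_of_mul_eq (hsum (g i))
  have hcard : Q * ∑ a, χ a = (Fintype.card A : 𝕜) • Q := by
    simp only [Finset.mul_sum, hQ, Finset.sum_const, Finset.card_univ, Nat.cast_smul_eq_nsmul]
  rw [← hQsum, hcard, inv_smul_smul₀ (Nat.cast_ne_zero.2 Fintype.card_ne_zero)]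

end CyclicAverage

lemma mul_aeval_of_mul_eq_smul {S R : Type*} [CommSemiring S] [Semiring R] [Algebra S R]
    {x a : R} {c : S} (h : x * a = c • x) (q : Polynomial S) :
    x * Polynomial.aeval a q = q.eval c • x := by
  induction q using Polynomial.induction_on' with
  | add p q hp hq => rw [map_add, mul_add, hp, hq, Polynomial.eval_add, add_smul]
  | monomial k s =>
    have hpow : x * a ^ k = c ^ k • x := by
      induction k with
      | zero => simp only [pow_zero, mul_one, one_smul]
      | succ k ih => rw [pow_succ, ← mul_assoc, ih, smul_mul_assoc, h, smul_smul, pow_succ]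
    rw [Polynomial.aeval_monomial, ← Algebra.smul_def, mul_smul_comm, hpow, smul_smul,
      Polynomial.eval_monomial]

section MatrixFacts

variable {m 𝕜 : Type*} [Fintype m] [DecidableEq m] [RCLike 𝕜]

-- Equality case of `|Tr ρU| ≤ Tr ρ`: writing `ρ = Cᴴ C`, the squared Hilbert–Schmidt norm of
-- `C U - C` is `2 Tr ρ - 2 Re Tr ρU`.
open scoped MatrixOrder in
lemma mul_eq_self_of_trace_mul_eq {ρ U : Matrix m m 𝕜} (hρ : ρ.PosSemidef)
    (hU : U * Uᴴ = 1) (h : (ρ * U).trace = ρ.trace) : ρ * U = ρ := by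
  obtain ⟨C, hC⟩ := CStarAlgebra.nonneg_iff_eq_star_mul_self.1 hρ.nonneg
  rw [Matrix.star_eq_conjTranspose] at hC
  have hstar : (Uᴴ * ρ).trace = ρ.trace := by
    rw [← hρ.isHermitian.eq, ← Matrix.conjTranspose_mul, Matrix.trace_conjTranspose, h,
      ← Matrix.trace_conjTranspose, hρ.isHermitian.eq]
  have hUρU : (Uᴴ * ρ * U).trace = ρ.trace := by
    rw [Matrix.trace_mul_cycle, hU, Matrix.one_mul]
  have hexpand : (C * U - C)ᴴ * (C * U - C) = Uᴴ * ρ * U - Uᴴ * ρ - ρ * U + ρ := by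
    simp only [hC, Matrix.conjTranspose_sub, Matrix.conjTranspose_mul, Matrix.sub_mul,
      Matrix.mul_sub, Matrix.mul_assoc]
    abel
  have hzero : ((C * U - C)ᴴ * (C * U - C)).trace = 0 := by
    simp only [hexpand, Matrix.trace_add, Matrix.trace_sub, hUρU, hstar, h]
    ring
  have hCU : C * U = C := sub_eq_zero.1 (Matrix.trace_conjTranspose_mul_self_eq_zero_iff.1 hzero)
  rw [hC, Matrix.mul_assoc, hCU]

lemma trace_cfc {A : Matrix m m 𝕜} (hA : A.IsHermitian) (f : ℝ → ℝ) :
    (cfc f A).trace = ∑ i, (f (hA.eigenvalues i) : 𝕜) := by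
  rw [hA.cfc_eq, Matrix.IsHermitian.cfc, Unitary.conjStarAlgAut_apply, Matrix.trace_mul_cycle,
    Unitary.coe_star_mul_self, Matrix.one_mul, Matrix.trace_diagonal]
  rfl

lemma mul_cfc_of_mul_eq_smul {x A : Matrix m m 𝕜} (hA : A.IsHermitian) {c : ℝ}
    (h : x * A = c • x) (f : ℝ → ℝ) : x * cfc f A = f c • x := by
  let s : Finset ℝ := insert c A.finite_real_spectrum.toFinset
  let q := Lagrange.interpolate s id f
  have hq {t : ℝ} (ht : t ∈ s) : q.eval t = f t :=
    Lagrange.eval_interpolate_at_node f Function.injective_id.injOn ht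
  have hcfc : cfc f A = cfc q.eval A := cfc_congr fun t ht => (hq (by simp [s, ht])).symm
  have hpoly : cfc q.eval A = Polynomial.aeval A q := cfc_polynomial q A hA.isSelfAdjoint
  rw [hcfc, hpoly, mul_aeval_of_mul_eq_smul h, hq (by simp [s])]

end MatrixFacts

section Weyl

lemma ch_eq_stdAddChar {d : ℕ} [NeZero d] (z : ZMod d) : ch d z = ZMod.stdAddChar z := by
  rw [ZMod.stdAddChar_apply, ZMod.toCircle_apply, ch]

lemma ch_zero (d : ℕ) : ch d 0 = 1 := by
  simp [ch]

lemma ch_add {d : ℕ} [NeZero d] (a b : ZMod d) : ch d (a + b) = ch d a * ch d b := by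
  simp only [ch_eq_stdAddChar, AddChar.map_add_eq_mul]

lemma norm_ch {d : ℕ} [NeZero d] (a : ZMod d) : ‖ch d a‖ = 1 := by
  rw [ch_eq_stdAddChar, AddChar.norm_apply]

lemma star_ch {d : ℕ} [NeZero d] (a : ZMod d) : star (ch d a) = ch d (-a) := by
  rw [ch_eq_stdAddChar, ch_eq_stdAddChar, AddChar.map_neg_eq_conj]
  rfl

lemma ch_pow_card {d : ℕ} [NeZero d] (a : ZMod d) : ch d a ^ d = 1 := by
  rw [ch_eq_stdAddChar, ← AddChar.map_nsmul_eq_pow, nsmul_eq_mul, ZMod.natCast_self, zero_mul,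
    AddChar.map_zero_eq_one]

lemma qdot_eq_dotProduct {d n : ℕ} (p k : QV d n) : qdot p k = p ⬝ᵥ k := rfl

lemma two_mul_inv_two {d : ℕ} (hd : Odd d) : (2 : ZMod d) * 2⁻¹ = 1 := by
  simpa using ZMod.coe_mul_inv_eq_one 2 (Nat.coprime_two_left.2 hd)

variable {d n : ℕ} [Fact (Nat.Prime d)]

lemma weyl_mul (hd : Odd d) (p q p' q' : QV d n) :
    weyl d n p q * weyl d n p' q' =
      ch d (2⁻¹ * (qdot p q' - qdot p' q)) • weyl d n (p + p') (q + q') := by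
  ext k' k
  simp only [weyl, Matrix.mul_apply, Matrix.of_apply, Matrix.smul_apply, smul_eq_mul]
  rw [Finset.sum_eq_single (k + q') (fun b _ hb => by rw [if_neg hb, mul_zero])
    (fun h => absurd (Finset.mem_univ _) h), if_pos rfl]
  have hiff : k' = k + q' + q ↔ k' = k + (q + q') := by rw [add_assoc, add_comm q' q]
  simp only [hiff, ite_mul, mul_ite, mul_zero, zero_mul, ← ch_add]
  congr 2
  simp only [qdot_eq_dotProduct, add_dotProduct, dotProduct_add]
  linear_combination -(p ⬝ᵥ q') * two_mul_inv_two hd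

lemma weyl_zero : weyl d n 0 0 = 1 := by
  ext k' k
  simp [weyl, Matrix.one_apply, qdot_eq_dotProduct, ch_zero]

lemma weyl_mul_weyl_neg (hd : Odd d) (p q : QV d n) :
    weyl d n p q * weyl d n (-p) (-q) = 1 := by
  simp [weyl_mul hd, qdot_eq_dotProduct, ch_zero, weyl_zero]

lemma weyl_conjTranspose (hd : Odd d) (p q : QV d n) :
    (weyl d n p q)ᴴ = weyl d n (-p) (-q) := by
  ext k' k
  have hiff : k = k' + q ↔ k' = k + -q := by rw [← sub_eq_add_neg, eq_sub_iff_add_eq, eq_comm]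
  simp only [weyl, Matrix.conjTranspose_apply, Matrix.of_apply, hiff, apply_ite star, star_ch,
    star_zero]
  refine if_ctx_congr Iff.rfl (fun hk => ?_) fun _ => rfl
  rw [hk]
  congr 1
  simp only [qdot_eq_dotProduct, dotProduct_add, neg_dotProduct, dotProduct_neg]
  linear_combination -(p ⬝ᵥ q) * two_mul_inv_two hd

lemma weyl_pow (hd : Odd d) (p q : QV d n) (k : ℕ) :
    weyl d n p q ^ k = weyl d n (k • p) (k • q) := by
  induction k with
  | zero => simp only [pow_zero, zero_smul, weyl_zero]
  | succ k ih =>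
    have hphase : qdot (k • p) q - qdot p (k • q) = 0 := by
      simp only [qdot_eq_dotProduct, smul_dotProduct, dotProduct_smul, sub_self]
    rw [pow_succ, ih, weyl_mul hd, hphase, mul_zero, ch_zero, one_smul, ← succ_nsmul, ← succ_nsmul]

lemma smul_weyl_pow_card (hd : Odd d) (x : ZMod d) (p q : QV d n) :
    (ch d x • weyl d n p q) ^ d = 1 := by
  have hperiod (p : QV d n) : d • p = 0 := by
    ext i
    simp
  rw [smul_pow, ch_pow_card, one_smul, weyl_pow hd, hperiod, hperiod, weyl_zero]

end Weyl

section Stabilizer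

variable {d n : ℕ} [Fact (Nat.Prime d)] {ρ : Mat d n}

lemma xi_zero (hρ : ρ.trace = 1) : xi d n ρ 0 = 1 := by
  simp [xi, weyl_zero, hρ]

lemma xi_neg (hd : Odd d) (hρ : ρ.IsHermitian) (a : QV d n × QV d n) :
    xi d n ρ (-a) = star (xi d n ρ a) := by
  rw [xi, xi, ← Matrix.trace_conjTranspose, Matrix.conjTranspose_mul, hρ.eq,
    weyl_conjTranspose hd, Matrix.trace_mul_comm]
  rfl

lemma xi_eq_of_mul_smul_weyl_eq (hd : Odd d) (hρ : ρ.trace = 1) {a : QV d n × QV d n} {c : ℂ}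
    (h : ρ * (c • weyl d n a.1 a.2) = ρ) : xi d n ρ a = c := by
  rw [xi]
  nth_rewrite 1 [← h]
  rw [Matrix.mul_assoc, Matrix.smul_mul, weyl_mul_weyl_neg hd]
  simp [hρ]

/-- The Weyl operator `w(a)` multiplied by the phase `Ξ_ρ(a)`: the operators summed in the mean
state of `ρ`. -/
noncomputable def phasedWeyl (ρ : Mat d n) (a : QV d n × QV d n) : Mat d n :=
  xi d n ρ a • weyl d n a.1 a.2

lemma phasedWeyl_zero (hρ : ρ.trace = 1) : phasedWeyl ρ 0 = 1 := by
  simp [phasedWeyl, xi_zero hρ, weyl_zero]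

lemma phasedWeyl_conjTranspose (hd : Odd d) (hρ : ρ.IsHermitian) (a : QV d n × QV d n) :
    (phasedWeyl ρ a)ᴴ = phasedWeyl ρ (-a) := by
  rw [phasedWeyl, phasedWeyl, xi_neg hd hρ, Matrix.conjTranspose_smul, weyl_conjTranspose hd]
  rfl

lemma phasedWeyl_mul_conjTranspose (hd : Odd d) {a : QV d n × QV d n}
    (ha : ‖xi d n ρ a‖ = 1) : phasedWeyl ρ a * (phasedWeyl ρ a)ᴴ = 1 := by
  rw [phasedWeyl, Matrix.conjTranspose_smul, weyl_conjTranspose hd, smul_mul_smul_comm,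
    weyl_mul_weyl_neg hd, ← starRingEnd_apply, Complex.mul_conj', ha, Complex.ofReal_one,
    one_pow, one_smul]

lemma trace_mul_phasedWeyl (hd : Odd d) (hρ : ρ.IsHermitian) (a : QV d n × QV d n) :
    (ρ * phasedWeyl ρ a).trace = (‖xi d n ρ a‖ : ℂ) ^ 2 := by
  have hneg : (ρ * weyl d n a.1 a.2).trace = star (xi d n ρ a) := by
    rw [← xi_neg hd hρ, xi, Prod.fst_neg, Prod.snd_neg, neg_neg, neg_neg]
  rw [phasedWeyl, Matrix.mul_smul, Matrix.trace_smul, hneg, smul_eq_mul, ← Complex.mul_conj']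
  rfl

lemma mul_phasedWeyl (hd : Odd d) (hρ : IsState d n ρ) {a : QV d n × QV d n}
    (ha : ‖xi d n ρ a‖ = 1) : ρ * phasedWeyl ρ a = ρ := by
  refine mul_eq_self_of_trace_mul_eq hρ.1 (phasedWeyl_mul_conjTranspose hd ha) ?_
  rw [trace_mul_phasedWeyl hd hρ.1.isHermitian, ha, hρ.2]
  simp

lemma xi_add (hd : Odd d) (hρ : IsState d n ρ) {a b : QV d n × QV d n}
    (ha : ‖xi d n ρ a‖ = 1) (hb : ‖xi d n ρ b‖ = 1) :
    xi d n ρ (a + b) =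
      xi d n ρ a * xi d n ρ b * ch d (2⁻¹ * (qdot a.1 b.2 - qdot b.1 a.2)) := by
  refine xi_eq_of_mul_smul_weyl_eq hd hρ.2 ?_
  rw [Prod.fst_add, Prod.snd_add, mul_smul, ← weyl_mul hd, ← smul_mul_smul_comm]
  change ρ * (phasedWeyl ρ a * phasedWeyl ρ b) = ρ
  rw [← Matrix.mul_assoc, mul_phasedWeyl hd hρ ha, mul_phasedWeyl hd hρ hb]

lemma norm_xi_add (hd : Odd d) (hρ : IsState d n ρ) {a b : QV d n × QV d n}
    (ha : ‖xi d n ρ a‖ = 1) (hb : ‖xi d n ρ b‖ = 1) : ‖xi d n ρ (a + b)‖ = 1 := by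
  rw [xi_add hd hρ ha hb, norm_mul, norm_mul, ha, hb, norm_ch, mul_one, mul_one]

lemma phasedWeyl_add (hd : Odd d) (hρ : IsState d n ρ) {a b : QV d n × QV d n}
    (ha : ‖xi d n ρ a‖ = 1) (hb : ‖xi d n ρ b‖ = 1) :
    phasedWeyl ρ (a + b) = phasedWeyl ρ a * phasedWeyl ρ b := by
  rw [phasedWeyl, xi_add hd hρ ha hb, Prod.fst_add, Prod.snd_add, mul_smul, ← weyl_mul hd,
    ← smul_mul_smul_comm, phasedWeyl, phasedWeyl]

/-- The group of labels `a` of the Weyl operators that stabilize `ρ` up to a phase, i.e. those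
with `|Ξ_ρ(a)| = 1`. -/
def stabilizerGroup (hd : Odd d) (hρ : IsState d n ρ) : AddSubgroup (QV d n × QV d n) where
  carrier := {a | ‖xi d n ρ a‖ = 1}
  zero_mem' := (congrArg norm (xi_zero hρ.2)).trans norm_one
  add_mem' := norm_xi_add hd hρ
  neg_mem' {a} ha := (congrArg norm (xi_neg hd hρ.1.isHermitian a)).trans ((norm_star _).trans ha)

/-- The representation `a ↦ Ξ_ρ(a) w(a)` of the stabilizer group of `ρ`. It is an `AddChar`
since the group is written additively and the operators multiplicatively. -/
noncomputable def stabilizerChar (hd : Odd d) (hρ : IsState d n ρ) :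
    AddChar (stabilizerGroup hd hρ) (Mat d n) where
  toFun a := phasedWeyl ρ a
  map_zero_eq_one' := phasedWeyl_zero hρ.2
  map_add_eq_mul' a b := phasedWeyl_add hd hρ a.2 b.2

/-- The analogue `d⁻ⁿ ∑_{a ∈ T} Ξ_ρ(a) w(a)` of the mean state of `ρ` for a group `T` of labels.
Every MSPS whose support contains that of `ρ` has this form. -/
noncomputable def subgroupMean (ρ : Mat d n) (T : AddSubgroup (QV d n × QV d n)) : Mat d n :=
  ((d : ℂ) ^ n)⁻¹ • ∑ a : T, phasedWeyl ρ a

lemma meanState_eq_subgroupMean (hd : Odd d) (hρ : IsState d n ρ) :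
    meanState d n ρ = subgroupMean ρ (stabilizerGroup hd hρ) := by
  rw [meanState, subgroupMean, ← Finset.sum_filter,
    Finset.sum_subtype (p := (· ∈ stabilizerGroup hd hρ)) {a | ‖xi d n ρ a‖ = 1}
      fun _ => Finset.mem_filter_univ _]
  rfl

lemma isHermitian_subgroupMean (hd : Odd d) (hρ : ρ.IsHermitian)
    (T : AddSubgroup (QV d n × QV d n)) : (subgroupMean ρ T).IsHermitian := by
  rw [Matrix.IsHermitian, subgroupMean, Matrix.conjTranspose_smul, Matrix.conjTranspose_sum]
  congr 1
  · simp
  · exact Fintype.sum_equiv (Equiv.neg T) _ _ fun a => phasedWeyl_conjTranspose hd hρ a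

lemma mul_subgroupMean (hd : Odd d) (hρ : IsState d n ρ) {T : AddSubgroup (QV d n × QV d n)}
    (hT : T ≤ stabilizerGroup hd hρ) :
    ρ * subgroupMean ρ T = ((Nat.card T : ℝ) / (d : ℝ) ^ n) • ρ := by
  have hfix (a : T) : ρ * phasedWeyl ρ a = ρ := mul_phasedWeyl hd hρ (hT a.2)
  simp only [subgroupMean, Matrix.mul_smul, Matrix.mul_sum, hfix, Finset.sum_const,
    Finset.card_univ, ← Nat.card_eq_fintype_card, ← Nat.cast_smul_eq_nsmul ℂ, smul_smul]
  rw [← Complex.coe_smul]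
  congr 1
  push_cast
  ring

end Stabilizer

section Divergence

variable {d n : ℕ} [Fact (Nat.Prime d)] {ρ σ : Mat d n}

lemma matRpow_eq_cfc (hσ : σ.IsHermitian) (t : ℝ) : matRpow σ t = cfc (fun x : ℝ => x ^ t) σ := by
  rw [hσ.cfc_eq, matRpow, dif_pos hσ, Matrix.IsHermitian.cfc, Unitary.conjStarAlgAut_apply]
  rfl

lemma matLog_eq_cfc (hσ : σ.IsHermitian) : matLog σ = cfc Real.log σ := by
  rw [hσ.cfc_eq, matLog, dif_pos hσ, Matrix.IsHermitian.cfc, Unitary.conjStarAlgAut_apply]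
  rfl

lemma isHermitian_matRpow (hσ : σ.IsHermitian) (t : ℝ) : (matRpow σ t).IsHermitian := by
  rw [matRpow_eq_cfc hσ]
  exact cfc_predicate (R := ℝ) _ σ

lemma trace_matRpow (hσ : σ.IsHermitian) (t : ℝ) :
    (matRpow σ t).trace.re = ∑ i, hσ.eigenvalues i ^ t := by
  rw [matRpow_eq_cfc hσ, trace_cfc hσ, Complex.re_sum]
  rfl

lemma trace_matRpow_pos (hρ : ρ.PosSemidef) (hρ0 : ρ ≠ 0) (t : ℝ) :
    0 < (matRpow ρ t).trace.re := by
  obtain ⟨i, hi⟩ := Function.ne_iff.1 (mt hρ.isHermitian.eigenvalues_eq_zero_iff.1 hρ0)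
  rw [trace_matRpow hρ.isHermitian]
  exact Finset.sum_pos' (fun j _ => Real.rpow_nonneg (hρ.eigenvalues_nonneg j) t)
    ⟨i, Finset.mem_univ i, Real.rpow_pos_of_pos ((hρ.eigenvalues_nonneg i).lt_of_ne' hi) t⟩

lemma matRpow_smul (hρ : ρ.PosSemidef) {s : ℝ} (hs : 0 ≤ s) (t : ℝ) :
    matRpow (s • ρ) t = s ^ t • matRpow ρ t := by
  have hsρ : (s • ρ).IsHermitian := (hρ.smul hs).isHermitian
  have hfin (S : Set ℝ) (hS : S.Finite) : ContinuousOn (fun x : ℝ => x ^ t) S :=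
    hS.continuousOn _
  rw [matRpow_eq_cfc hsρ, matRpow_eq_cfc hρ.isHermitian,
    ← cfc_comp_smul s _ ρ (hfin _ (Matrix.finite_real_spectrum.image _))
      hρ.isHermitian.isSelfAdjoint,
    ← cfc_smul _ _ ρ (hfin _ Matrix.finite_real_spectrum)]
  refine cfc_congr fun x hx => ?_
  obtain ⟨i, rfl⟩ := hρ.isHermitian.spectrum_real_eq_range_eigenvalues ▸ hx
  exact Real.mul_rpow hs (hρ.eigenvalues_nonneg i)

lemma matRpow_mul_mul_matRpow (hρ : ρ.IsHermitian) (hσ : σ.IsHermitian) {c : ℝ} (hc : 0 < c)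
    (h : ρ * σ = c • ρ) (t : ℝ) :
    matRpow σ t * ρ * matRpow σ t = c ^ (2 * t) • ρ := by
  have hright : ρ * matRpow σ t = c ^ t • ρ := by
    rw [matRpow_eq_cfc hσ, mul_cfc_of_mul_eq_smul hσ h]
  have hleft : matRpow σ t * ρ = c ^ t • ρ := by
    rw [← hρ.eq, ← (isHermitian_matRpow hσ t).eq, ← Matrix.conjTranspose_mul, hright,
      Matrix.conjTranspose_smul, star_trivial]
  rw [hleft, smul_mul_assoc, hright, smul_smul, ← Real.rpow_add hc, two_mul]

lemma suppLE.mul_eq_self {B : Mat d n} (h : suppLE ρ σ) (hB : σ * B = σ) : ρ * B = ρ := by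
  rw [← sub_eq_zero, ← mul_sub_one]
  refine Matrix.ext_of_mulVec_single fun j => ?_
  rw [← Matrix.mulVec_mulVec, Matrix.zero_mulVec]
  apply h
  rw [Matrix.mulVec_mulVec, mul_sub_one, hB, sub_self, Matrix.zero_mulVec]

lemma suppLE_of_mul_eq_smul {c : ℝ} (hc : c ≠ 0) (h : ρ * σ = c • ρ) : suppLE ρ σ := by
  intro v hv
  have hcv : c • ρ *ᵥ v = 0 := by
    rw [← Matrix.smul_mulVec, ← h, ← Matrix.mulVec_mulVec, hv, Matrix.mulVec_zero]
  exact (smul_eq_zero.1 hcv).resolve_left hc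

lemma sandRenyi_eq_top {α : ℝ} (h : ¬ suppLE ρ σ) : sandRenyi α ρ σ = ⊤ := by
  rw [sandRenyi, relEnt, if_neg h, if_neg h, ite_self]

lemma vnEnt_eq_neg_trace (hρ : ρ.IsHermitian) : vnEnt ρ = -(ρ * matLog ρ).trace.re := by
  have hmul : ρ * matLog ρ = cfc (fun x : ℝ => x * Real.log x) ρ := by
    rw [matLog_eq_cfc hρ, cfc_mul (fun x : ℝ => x) Real.log ρ continuousOn_id
      (Matrix.finite_real_spectrum.continuousOn _), cfc_id' ℝ ρ hρ.isSelfAdjoint]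
  rw [vnEnt, dif_pos hρ, hmul, trace_cfc hρ, Complex.re_sum]
  rfl

lemma renyiEnt_one (ρ : Mat d n) : renyiEnt 1 ρ = vnEnt ρ := by
  simp [renyiEnt, vnEnt]

lemma renyiEnt_ofReal (hρ : ρ.IsHermitian) {α : ℝ} (hα : 0 < α) (hα1 : α ≠ 1) :
    renyiEnt (ENNReal.ofReal α) ρ = (1 - α)⁻¹ * Real.log (matRpow ρ α).trace.re := by
  have h0 : ENNReal.ofReal α ≠ 0 := (ENNReal.ofReal_pos.2 hα).ne'
  have h1 : ENNReal.ofReal α ≠ 1 := by rwa [Ne, ENNReal.ofReal_eq_one]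
  rw [renyiEnt, dif_pos hρ, if_neg h0, if_neg h1, if_neg ENNReal.ofReal_ne_top,
    ENNReal.toReal_ofReal hα.le, trace_matRpow hρ]

lemma relEnt_of_mul_eq_smul (hρ : IsState d n ρ) (hσ : σ.IsHermitian) {c : ℝ} (hc : c ≠ 0)
    (h : ρ * σ = c • ρ) : relEnt ρ σ = ((-vnEnt ρ - Real.log c : ℝ) : EReal) := by
  have hlog : ρ * matLog σ = Real.log c • ρ := by
    rw [matLog_eq_cfc hσ, mul_cfc_of_mul_eq_smul hσ h]
  rw [relEnt, if_pos (suppLE_of_mul_eq_smul hc h), Matrix.mul_sub, hlog, Matrix.trace_sub,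
    Matrix.trace_smul, hρ.2, vnEnt_eq_neg_trace hρ.1.isHermitian]
  simp

lemma sandRenyi_of_mul_eq_smul (hρ : IsState d n ρ) (hσ : σ.IsHermitian) {c : ℝ} (hc : 0 < c)
    (h : ρ * σ = c • ρ) {α : ℝ} (hα : 0 < α) :
    sandRenyi α ρ σ = ((-renyiEnt (ENNReal.ofReal α) ρ - Real.log c : ℝ) : EReal) := by
  obtain rfl | hα1 := eq_or_ne α 1
  · rw [sandRenyi, if_pos rfl, relEnt_of_mul_eq_smul hρ hσ hc.ne' h, ENNReal.ofReal_one,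
      renyiEnt_one]
  have hρ0 : ρ ≠ 0 := by
    rintro rfl
    simpa using hρ.2
  have hlog : Real.log (matRpow (matRpow σ ((1 - α) / (2 * α)) * ρ *
      matRpow σ ((1 - α) / (2 * α))) α).trace.re =
      (1 - α) * Real.log c + Real.log (matRpow ρ α).trace.re := by
    rw [matRpow_mul_mul_matRpow hρ.1.isHermitian hσ hc h,
      matRpow_smul hρ.1 (Real.rpow_pos_of_pos hc _).le, Matrix.trace_smul, Complex.smul_re,
      smul_eq_mul, ← Real.rpow_mul hc.le, Real.log_mul (Real.rpow_pos_of_pos hc _).ne'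
      (trace_matRpow_pos hρ.1 hρ0 α).ne', Real.log_rpow hc]
    congr 2
    field_simp
  rw [sandRenyi, if_neg hα1, if_pos (suppLE_of_mul_eq_smul hc.ne' h), hlog,
    renyiEnt_ofReal hρ.1.isHermitian hα hα1]
  have hα1' : 1 - α ≠ 0 := sub_ne_zero.2 hα1.symm
  rw [← neg_sub 1 α, inv_neg, EReal.coe_eq_coe_iff]
  field_simp
  ring

end Divergence

section MSPS

variable {d n : ℕ} [Fact (Nat.Prime d)] {ρ σ : Mat d n}

lemma card_div_dim_pos (T : AddSubgroup (QV d n × QV d n)) :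
    0 < (Nat.card T : ℝ) / (d : ℝ) ^ n :=
  div_pos (Nat.cast_pos.2 Nat.card_pos) (pow_pos (Nat.cast_pos.2 (NeZero.pos d)) n)

lemma sandRenyi_subgroupMean (hd : Odd d) (hρ : IsState d n ρ)
    {T : AddSubgroup (QV d n × QV d n)} (hT : T ≤ stabilizerGroup hd hρ) {α : ℝ} (hα : 0 < α) :
    sandRenyi α ρ (subgroupMean ρ T) =
      ((-renyiEnt (ENNReal.ofReal α) ρ - Real.log (Nat.card T / (d : ℝ) ^ n) : ℝ) : EReal) :=
  sandRenyi_of_mul_eq_smul hρ (isHermitian_subgroupMean hd hρ.1.isHermitian T)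
    (card_div_dim_pos T) (mul_subgroupMean hd hρ hT) hα

lemma subgroupMean_closure_eq (hd : Odd d) (hρ : IsState d n ρ) {r : ℕ}
    {g : Fin r → QV d n × QV d n}
    (hg : AddSubgroup.closure (Set.range g) ≤ stabilizerGroup hd hρ) :
    subgroupMean ρ (AddSubgroup.closure (Set.range g)) =
      ((Nat.card (AddSubgroup.closure (Set.range g)) : ℂ) / (d : ℂ) ^ n) •
        (List.ofFn fun i => cyclicAverage ℂ d (phasedWeyl ρ (g i))).prod := by
  set T := AddSubgroup.closure (Set.range g)
  let g' (i : Fin r) : T := ⟨g i, AddSubgroup.subset_closure ⟨i, rfl⟩⟩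
  have hperiod (i : Fin r) : d • g' i = 0 := by
    ext j <;> simp [g']
  have hclosure : AddSubgroup.closure (Set.range g') = ⊤ := by
    rw [← AddSubgroup.closure_closure_coe_preimage]
    congr 1
    ext a
    simp [g', Subtype.ext_iff]
  have haverage := list_prod_cyclicAverage_eq_average (𝕜 := ℂ)
    ((stabilizerChar hd hρ).compAddMonoidHom (AddSubgroup.inclusion hg)) hperiod hclosure
  change (List.ofFn fun i => cyclicAverage ℂ d (phasedWeyl ρ (g i))).prod =
    (Fintype.card T : ℂ)⁻¹ • ∑ a : T, phasedWeyl ρ a at haverage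
  have hcard : (Fintype.card T : ℂ) ≠ 0 := Nat.cast_ne_zero.2 Fintype.card_ne_zero
  rw [haverage, subgroupMean, smul_smul, Nat.card_eq_fintype_card]
  congr 1
  field_simp

lemma IsMSPS.exists_eq_subgroupMean (hd : Odd d) (hρ : IsState d n ρ) (hσ : IsMSPS d n σ)
    (hsupp : suppLE ρ σ) : ∃ T ≤ stabilizerGroup hd hρ, σ = subgroupMean ρ T := by
  obtain ⟨r, hr, p, q, x, hcomm, hcard, rfl⟩ := hσ
  let g (i : Fin r) : QV d n × QV d n := (p i, q i)
  let v (i : Fin r) : Mat d n := ch d (x i) • weyl d n (p i) (q i)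
  change suppLE ρ (((d : ℂ) ^ (n - r))⁻¹ • (List.ofFn fun i => cyclicAverage ℂ d (v i)).prod)
    at hsupp
  have hfix (i : Fin r) : ρ * v i = ρ := by
    refine hsupp.mul_eq_self ?_
    rw [smul_mul_assoc, list_prod_cyclicAverage_mul
      (fun i j => ((hcomm i j).smul_left _).smul_right _) fun i => smul_weyl_pow_card hd ..]
  have hxi (i : Fin r) : xi d n ρ (g i) = ch d (x i) := xi_eq_of_mul_smul_weyl_eq hd hρ.2 (hfix i)
  have hg : AddSubgroup.closure (Set.range g) ≤ stabilizerGroup hd hρ := by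
    rw [AddSubgroup.closure_le]
    rintro _ ⟨i, rfl⟩
    exact (congrArg norm (hxi i)).trans (norm_ch _)
  have hv (i : Fin r) : phasedWeyl ρ (g i) = v i := by
    rw [phasedWeyl, hxi]
  refine ⟨_, hg, ?_⟩
  have hd0 : (d : ℂ) ≠ 0 := NeZero.ne _
  rw [subgroupMean_closure_eq hd hρ hg, hcard, pow_sub₀ _ hd0 hr]
  simp only [hv]
  congr 1
  push_cast
  field_simp

lemma sandRenyi_meanState_lt_of_suppLE (hd : Odd d) (hρ : IsState d n ρ) (hσ : IsMSPS d n σ)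
    (hne : σ ≠ meanState d n ρ) (hsupp : suppLE ρ σ) {α : ℝ} (hα : 0 < α) :
    sandRenyi α ρ (meanState d n ρ) < sandRenyi α ρ σ := by
  obtain ⟨T, hT, rfl⟩ := hσ.exists_eq_subgroupMean hd hρ hsupp
  rw [meanState_eq_subgroupMean hd hρ] at hne ⊢
  have hcard : Nat.card T < Nat.card (stabilizerGroup hd hρ) :=
    Set.ncard_lt_ncard (hT.lt_of_ne fun h => hne (h ▸ rfl))
  have hdn : 0 < (d : ℝ) ^ n := pow_pos (Nat.cast_pos.2 (NeZero.pos d)) n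
  rw [sandRenyi_subgroupMean hd hρ le_rfl hα, sandRenyi_subgroupMean hd hρ hT hα,
    EReal.coe_lt_coe_iff]
  gcongr
  exact card_div_dim_pos T

end MSPS

/-- For every `n`-qudit state `ρ`, every `α ∈ [1,∞)` (with `D_1 = D`
the relative entropy) and every MSPS `σ ≠ M(ρ)`: `D_α(ρ‖σ) > D_α(ρ‖M(ρ))`; the mean
state is the unique minimizer among MSPS. -/
theorem statement3 (d n : ℕ) [Fact (Nat.Prime d)] (hd : Odd d) (hn : 1 ≤ n)
    (ρ : Mat d n) (hρ : IsState d n ρ) (α : ℝ) (hα : 1 ≤ α)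
    (σ : Mat d n) (hσ : IsMSPS d n σ) (hne : σ ≠ meanState d n ρ) :
    sandRenyi α ρ (meanState d n ρ) < sandRenyi α ρ σ := by
  by_cases hsupp : suppLE ρ σ
  · exact sandRenyi_meanState_lt_of_suppLE hd hρ hσ hne hsupp (zero_lt_one.trans_le hα)
  · rw [sandRenyi_eq_top hsupp, meanState_eq_subgroupMean hd hρ,
      sandRenyi_subgroupMean hd hρ le_rfl (zero_lt_one.trans_le hα)]
    exact EReal.coe_lt_top _

end PaperQI
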